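/- Let B ⊂ A be a regular inclusion of simple unital C*-algebras with a finite-index conditional expectation, and let E₀ : A → B be the minimal conditional expectation. Then E₀ admits a two-sided orthonormal quasi-basis: there exists a finite family (v_k) in A such that E₀(v_k* v_l) = δ_{kl}·1 for all k, l, and x = Σ_k E₀(x v_k) v_k* = Σ_k E₀(x v_k*) v_k for every x ∈ A. -/

import Mathlib

/-!
Write `M` for the relative commutant of `B` and `E` for the minimal expectation, of index `r`, with
quasi-basis `l`. Both `E` and `x ↦ ∑ i, l i * x * (l i)*` take scalar values on `M`, because the
centres of the simple algebras `B` and `A` are trivial (`exists_scalar_of_central`).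

*Consequences of minimality.* For self-adjoint `x ∈ M`, cutting `E` by `exp (t x / 2)` yields a
family of expectations onto `B`; the derivative of their index vanishes at `t = 0`, which says
`∑ i, l i * x * (l i)* = r E x` on `M` (`MinWith.stationary`). Any other expectation has the form
`E (· d)` with `d ∈ M`, and stationarity of two minimal ones forces `d = 1` (`MinWith.unique`).
Hence `E (u x u*) = u (E x) u*` for `u` normalizing `B` (`MinWith.conj`), and differentiating this
along one-parameter groups of unitaries of `M` gives `E (m y) = E (y m)` for `m ∈ M`
(`MinWith.tracial`). For `v = u m` the two combine into the exchange formula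
`E (v y) = u E (y v) u*` (`MinWith.exchange`).

*The basis.* Consider orthonormal families of elements `v = u m` with `u` normalizing `B` and
`m ∈ M` (`GoodFamily`). Bessel's inequality summed over the quasi-basis, together with the exchange
formula, bounds their size by `r` (`GoodFamily.card_le`). If such a family fails to reconstruct a
normalizing unitary `w`, the defect `w - ∑ k, v k * E ((v k)* w)` is again of the form `w m`; its
norm `E (m* m)` is a nonzero scalar, so after scaling it enlarges the family (`GoodFamily.extend`).
A family that cannot be enlarged thus reconstructs the normalizer, and by regularity all of `A`.
By the exchange formula the right expansion along it agrees with the left one (`two_sided_basis`).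
-/

namespace RegularInclusion

variable {A : Type*} [NormedRing A] [StarRing A] [CStarRing A] [CompleteSpace A]
  [NormedAlgebra ℂ A] [StarModule ℂ A]

/-- A conditional expectation of `A` onto the subset `B`: a `ℂ`-linear positive
`B`-bimodular projection of `A` onto `B`. -/
def IsCondExp (B : Set A) (E : A →ₗ[ℂ] A) : Prop :=
  (∀ x, E x ∈ B) ∧ (∀ b ∈ B, E b = b) ∧
  (∀ x, ∃ y, E (star x * x) = star y * y) ∧
  (∀ b₁ ∈ B, ∀ b₂ ∈ B, ∀ x, E (b₁ * x * b₂) = b₁ * E x * b₂)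

/-- `l` is a right quasi-basis for `E`, witnessing finite index. -/
def IsRightQB (E : A →ₗ[ℂ] A) {n : ℕ} (l : Fin n → A) : Prop :=
  ∀ x, x = ∑ i, E (x * l i) * star (l i)

/-- The centralizer (relative commutant) `C_A(B)` of `B` in `A`. -/
def cent (B : Set A) : Set A := {x | ∀ b ∈ B, x * b = b * x}

/-- The normalizer `N_A(B) = {u ∈ U(A) : uBu* = B}` of `B` in `A`. -/
def normalizer (B : Set A) : Set A :=
  {u | u ∈ unitary A ∧ (fun x => u * x * star u) '' B = B}

/-- The set `U(B)` of unitaries of `B`. -/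
def UB (B : Set A) : Set A := {b | b ∈ B ∧ b ∈ unitary A}

/-- The set `U(B)·U(C_A(B))` of products of a unitary of `B` and a unitary of
the centralizer of `B`. -/
def UBC (B : Set A) : Set A :=
  {x | ∃ b c, b ∈ B ∧ b ∈ unitary A ∧ c ∈ cent B ∧ c ∈ unitary A ∧ x = b * c}

/-- Simplicity of the C*-algebra (given as the subset `S` of `A`): the only closed
two-sided ideals of `S` are `{0}` and `S`. -/
def IsSimpleCStar (S : Set A) : Prop :=
  ∀ I : Set A, I ⊆ S → IsClosed I → (0 : A) ∈ I →
    (∀ x ∈ I, ∀ y ∈ I, x + y ∈ I) →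
    (∀ x ∈ I, ∀ b ∈ S, x * b ∈ I ∧ b * x ∈ I) →
    I = {0} ∨ I = S

/-- The intermediate C*-subalgebra `C := C*(B ∪ C_A(B))` generated by `B` and the
centralizer of `B`. -/
def genC (B : Set A) : StarSubalgebra ℂ A :=
  (StarAlgebra.adjoin ℂ (B ∪ cent B)).topologicalClosure

/-- Regularity of the inclusion `B ⊆ A`: the normalizer of `B` generates `A` as a
C*-algebra. -/
def IsRegular (B : Set A) : Prop :=
  (StarAlgebra.adjoin ℂ (normalizer B)).topologicalClosure = ⊤

/-- `E₀` is the minimal conditional expectation of `A` onto `B`: the finite-index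
conditional expectation whose (scalar) Watatani index is least among all finite-index
conditional expectations onto `B`. -/
def IsMinimalCondExp (B : Set A) (E₀ : A →ₗ[ℂ] A) : Prop :=
  IsCondExp B E₀ ∧
  ∃ (r₀ : ℝ) (n : ℕ) (l : Fin n → A), IsRightQB E₀ l ∧
    (∑ i, l i * star (l i)) = (r₀ : ℂ) • 1 ∧
    ∀ E : A →ₗ[ℂ] A, IsCondExp B E → ∀ (m : ℕ) (μ : Fin m → A), IsRightQB E μ →
      ∀ r : ℝ, (∑ i, μ i * star (μ i)) = (r : ℂ) • 1 → r₀ ≤ r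

section Helpers

/-! ### Conditional expectations and the relative commutant -/

set_option linter.unusedSectionVars false

variable {R : Type*} [CStarAlgebra R] [PartialOrder R] [StarOrderedRing R]
  {B : StarSubalgebra ℂ R} {E : R →ₗ[ℂ] R}

lemma IsCondExp.map_mul_left (hE : IsCondExp (B : Set R) E) {b : R} (hb : b ∈ B) (x : R) :
    E (b * x) = b * E x := by
  simpa using hE.2.2.2 b hb 1 B.one_mem x

lemma IsCondExp.map_mul_right (hE : IsCondExp (B : Set R) E) {b : R} (hb : b ∈ B) (x : R) :
    E (x * b) = E x * b := by
  simpa using hE.2.2.2 1 B.one_mem b hb x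

lemma IsCondExp.map_one (hE : IsCondExp (B : Set R) E) : E 1 = 1 :=
  hE.2.1 1 B.one_mem

lemma IsCondExp.map_nonneg (hE : IsCondExp (B : Set R) E) {x : R} (hx : 0 ≤ x) : 0 ≤ E x := by
  obtain ⟨y, rfl⟩ := CStarAlgebra.nonneg_iff_eq_star_mul_self.mp hx
  obtain ⟨z, hz⟩ := hE.2.2.1 y
  rw [hz]
  exact star_mul_self_nonneg z

lemma IsCondExp.map_star (hE : IsCondExp (B : Set R) E) (x : R) : E (star x) = star (E x) :=
  StarHomClass.map_star (PositiveLinearMap.mk₀ E fun _ hx => hE.map_nonneg hx) x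

lemma IsCondExp.continuous (hE : IsCondExp (B : Set R) E) : Continuous E :=
  map_continuous (PositiveLinearMap.mk₀ E fun _ hx => hE.map_nonneg hx)

/-- The adjoint form of the reconstruction formula of a right quasi-basis. -/
lemma IsRightQB.expand (hE : IsCondExp (B : Set R) E) {n : ℕ} {l : Fin n → R}
    (hl : IsRightQB E l) (x : R) : x = ∑ i, l i * E (star (l i) * x) := by
  have h := congrArg star (hl (star x))
  simpa [star_sum, ← hE.map_star] using h

/-- A conditional expectation with a quasi-basis is faithful: by a Cauchy–Schwarz argument,
`E (x* x) = 0` forces every coefficient `E (a* x)` to vanish. -/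
lemma IsCondExp.faithful (hE : IsCondExp (B : Set R) E) {n : ℕ} {l : Fin n → R}
    (hl : IsRightQB E l) {x : R} (hx : E (star x * x) = 0) : x = 0 := by
  have key : ∀ a : R, E (star a * x) = 0 := by
    intro a
    set b := E (star a * x) with hb
    have hbB : b ∈ B := hE.1 _
    have hbs : star b ∈ B := star_mem hbB
    have hb' : E (star x * a) = star b := by rw [hb, ← hE.map_star]; simp
    set c := E (star a * a) with hc
    have hc0 : 0 ≤ c := hE.map_nonneg (star_mul_self_nonneg a)
    -- The step size `t` is small enough for `t * ‖E (a* a)‖ ≤ 1`.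
    set t : ℝ := (‖c‖ + 1)⁻¹ with ht
    have htpos : 0 < t := by positivity
    have h1 : 0 ≤ E (star (x - (t : ℂ) • (a * b)) * (x - (t : ℂ) • (a * b))) :=
      hE.map_nonneg (star_mul_self_nonneg _)
    have h2 : E (star (x - (t : ℂ) • (a * b)) * (x - (t : ℂ) • (a * b)))
        = t • (t • (star b * c * b) - (2 : ℝ) • (star b * b)) := by
      have e : star (x - (t : ℂ) • (a * b)) * (x - (t : ℂ) • (a * b))
          = star x * x - (t : ℂ) • ((star x * a) * b) - (t : ℂ) • (star b * (star a * x))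
            + (t : ℂ) • (t : ℂ) • (star b * ((star a * a) * b)) := by
        simp only [star_sub, star_smul, star_mul, sub_mul, mul_sub, smul_mul_assoc,
          mul_smul_comm, mul_assoc, Complex.star_def, Complex.conj_ofReal, smul_sub]
        abel
      rw [e]
      simp only [map_add, map_sub, map_smul, hx, hE.map_mul_left hbs, hE.map_mul_right hbB, hb',
        ← hb, ← hc]
      simp only [Complex.coe_smul, smul_sub, smul_smul, mul_assoc]
      rw [mul_comm t 2, two_mul t, add_smul]
      abel
    rw [h2] at h1
    have h3 : 0 ≤ t • (star b * c * b) - (2 : ℝ) • (star b * b) := by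
      have := smul_nonneg (inv_nonneg.mpr htpos.le) h1
      rwa [smul_smul, inv_mul_cancel₀ htpos.ne', one_smul] at this
    have h4 : star b * c * b ≤ ‖c‖ • (star b * b) :=
      CStarAlgebra.star_left_conjugate_le_norm_smul (IsSelfAdjoint.of_nonneg hc0)
    have h5 : t • (star b * c * b) ≤ (1 : ℝ) • (star b * b) := by
      calc t • (star b * c * b) ≤ t • (‖c‖ • (star b * b)) := smul_le_smul_of_nonneg_left h4 htpos.le
        _ = (t * ‖c‖) • (star b * b) := by rw [smul_smul]
        _ ≤ (1 : ℝ) • (star b * b) := by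
          refine smul_le_smul_of_nonneg_right ?_ (star_mul_self_nonneg b)
          rw [ht, inv_mul_le_iff₀ (by positivity)]
          linarith
    have h6 : star b * b ≤ 0 := by
      have := (sub_nonneg.mp h3).trans h5
      rw [two_smul, one_smul] at this
      simpa using this
    have h7 := le_antisymm h6 (star_mul_self_nonneg b)
    exact (CStarRing.star_mul_self_eq_zero_iff b).mp h7
  rw [hl.expand hE x]
  simp [key]

/-- A positive scalar multiple of the unit has a nonnegative real coefficient. -/
lemma exists_real_of_smul_one_nonneg [Nontrivial R] {c : ℂ} (h : 0 ≤ c • (1 : R)) :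
    ∃ s : ℝ, 0 ≤ s ∧ c = s := by
  have hinj : Function.Injective fun z : ℂ => z • (1 : R) := smul_left_injective ℂ one_ne_zero
  have hsa : star c = c := by
    apply hinj
    have := (IsSelfAdjoint.of_nonneg h).star_eq
    simpa using this
  have hc : c = (c.re : ℂ) := (Complex.conj_eq_iff_re.mp hsa).symm
  rcases le_or_gt 0 c.re with h0 | h0
  · exact ⟨c.re, h0, hc⟩
  · refine ⟨0, le_rfl, ?_⟩
    apply hinj
    have h1 : 0 ≤ (-c.re) • (1 : R) := smul_nonneg (by linarith) zero_le_one
    have h2 : 0 ≤ -(c • (1 : R)) := by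
      rw [hc, Complex.coe_smul]
      simpa using h1
    simpa using le_antisymm (neg_nonneg.mp h2) h

/-- The centre of a simple closed `*`-subalgebra consists of scalars: for `z` central with `c` in
its spectrum, the ideal generated by `z - c` cannot contain `1`. -/
lemma exists_scalar_of_central [Nontrivial R] {S : StarSubalgebra ℂ R}
    (hcl : IsClosed (S : Set R)) (hS : IsSimpleCStar (S : Set R)) {z : R} (hz : z ∈ S)
    (hcomm : ∀ b ∈ S, z * b = b * z) : ∃ c : ℂ, z = c • (1 : R) := by
  obtain ⟨c, hc⟩ := spectrum.nonempty z
  refine ⟨c, ?_⟩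
  set y := z - c • (1 : R) with hy
  have hyS : y ∈ S := sub_mem hz (S.smul_mem S.one_mem c)
  have hyc : ∀ b ∈ S, y * b = b * y := by
    intro b hb
    simp [hy, sub_mul, mul_sub, hcomm b hb]
  have hnu : ¬ IsUnit y := by
    intro hu
    apply hc
    rw [spectrum.mem_resolventSet_iff, Algebra.algebraMap_eq_smul_one, ← IsUnit.neg_iff]
    simpa [hy] using hu
  set J : Set R := (fun s => y * s) '' (S : Set R) with hJ
  have hJS : J ⊆ S := by
    rintro _ ⟨s, hs, rfl⟩
    exact mul_mem hyS hs
  have := hS (closure J) (closure_minimal hJS hcl) isClosed_closure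
    (subset_closure ⟨0, S.zero_mem, by simp⟩)
    (by
      intro a ha b hb
      refine map_mem_closure₂ continuous_add ha hb ?_
      rintro _ ⟨s, hs, rfl⟩ _ ⟨t, ht, rfl⟩
      exact ⟨s + t, add_mem hs ht, mul_add _ _ _⟩)
    (by
      intro a ha b hb
      constructor
      · refine map_mem_closure (f := fun w => w * b) (continuous_mul_const b) ha ?_
        rintro _ ⟨s, hs, rfl⟩
        exact ⟨s * b, mul_mem hs hb, by simp [mul_assoc]⟩
      · refine map_mem_closure (f := fun w => b * w) (continuous_const_mul b) ha ?_
        rintro _ ⟨s, hs, rfl⟩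
        refine ⟨b * s, mul_mem hb hs, ?_⟩
        simp only [← mul_assoc, hyc b hb])
  rcases this with h | h
  · have : y ∈ closure J := subset_closure ⟨1, S.one_mem, by simp⟩
    rw [h] at this
    exact sub_eq_zero.mp this
  · exfalso
    have h1 : (1 : R) ∈ closure J := by rw [h]; exact S.one_mem
    obtain ⟨_, hw, s, hs, rfl⟩ := mem_closure_iff_nhds.mp h1 _
      (Units.isOpen.mem_nhds (isUnit_one : IsUnit (1 : R)))
    obtain ⟨w, hw⟩ : IsUnit (y * s) := hw
    apply hnu
    have hcom : Commute y s := hyc s hs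
    exact (hcom.isUnit_mul_iff.mp ⟨w, hw⟩).1

lemma cent_mul {B : StarSubalgebra ℂ R} {x y : R} (hx : x ∈ cent (B : Set R))
    (hy : y ∈ cent (B : Set R)) : x * y ∈ cent (B : Set R) := by
  intro b hb
  rw [mul_assoc, hy b hb, ← mul_assoc, hx b hb, mul_assoc]

lemma cent_star {B : StarSubalgebra ℂ R} {x : R} (hx : x ∈ cent (B : Set R)) :
    star x ∈ cent (B : Set R) := by
  intro b hb
  have := congrArg star (hx (star b) (star_mem hb : star b ∈ B))
  simpa using this.symm

lemma cent_one {B : StarSubalgebra ℂ R} : (1 : R) ∈ cent (B : Set R) := fun b _ => by simp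

lemma cent_smul {B : StarSubalgebra ℂ R} {x : R} (hx : x ∈ cent (B : Set R)) (c : ℂ) :
    c • x ∈ cent (B : Set R) := by
  intro b hb
  rw [smul_mul_assoc, mul_smul_comm, hx b hb]

lemma cent_add {B : StarSubalgebra ℂ R} {x y : R} (hx : x ∈ cent (B : Set R))
    (hy : y ∈ cent (B : Set R)) : x + y ∈ cent (B : Set R) := by
  intro b hb
  rw [add_mul, mul_add, hx b hb, hy b hb]

lemma cent_exp {B : StarSubalgebra ℂ R} {x : R} (hx : x ∈ cent (B : Set R)) :
    NormedSpace.exp x ∈ cent (B : Set R) :=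
  fun b hb => (show Commute x b from hx b hb).exp_left

lemma cent_realPart {B : StarSubalgebra ℂ R} {x : R} (hx : x ∈ cent (B : Set R)) :
    ((realPart x : selfAdjoint R) : R) ∈ cent (B : Set R) := by
  rw [realPart_apply_coe]
  have := cent_smul (cent_add hx (cent_star hx)) ((2⁻¹ : ℝ) : ℂ)
  rwa [Complex.coe_smul] at this

lemma cent_imaginaryPart {B : StarSubalgebra ℂ R} {x : R} (hx : x ∈ cent (B : Set R)) :
    ((imaginaryPart x : selfAdjoint R) : R) ∈ cent (B : Set R) := by
  rw [imaginaryPart_apply_coe]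
  have h1 : x - star x ∈ cent (B : Set R) := by
    simpa [sub_eq_add_neg] using cent_add hx (cent_smul (cent_star hx) (-1))
  have := cent_smul (cent_smul h1 ((2⁻¹ : ℝ) : ℂ)) (-Complex.I)
  rwa [Complex.coe_smul] at this

/-- On the relative commutant a conditional expectation takes scalar values. -/
lemma IsCondExp.scalar [Nontrivial R] (hE : IsCondExp (B : Set R) E)
    (hcl : IsClosed (B : Set R)) (hB : IsSimpleCStar (B : Set R)) {x : R}
    (hx : x ∈ cent (B : Set R)) : ∃ c : ℂ, E x = c • (1 : R) :=
  exists_scalar_of_central hcl hB (hE.1 x) fun b hb => by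
    rw [← hE.map_mul_left hb, ← hE.map_mul_right hb, hx b hb]

/-- For `x` in the relative commutant, `∑ i, l i * x * (l i)*` is central in `R`, hence scalar. -/
lemma IsRightQB.scalar [Nontrivial R] (hE : IsCondExp (B : Set R) E)
    (hR : IsSimpleCStar (Set.univ : Set R)) {n : ℕ} {l : Fin n → R} (hl : IsRightQB E l) {x : R}
    (hx : x ∈ cent (B : Set R)) : ∃ c : ℂ, ∑ i, l i * x * star (l i) = c • (1 : R) := by
  refine exists_scalar_of_central (S := ⊤) (by simp) (by simpa using hR) trivial fun a _ => ?_
  symm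
  calc a * ∑ i, l i * x * star (l i)
      = ∑ i, (∑ j, l j * E (star (l j) * (a * l i))) * x * star (l i) := by
        simp only [Finset.mul_sum, ← hl.expand hE, mul_assoc]
    _ = ∑ j, l j * x * ∑ i, E (star (l j) * a * l i) * star (l i) := by
        simp only [Finset.sum_mul, Finset.mul_sum]
        rw [Finset.sum_comm]
        refine Finset.sum_congr rfl fun j _ => Finset.sum_congr rfl fun i _ => ?_
        have := hx (E (star (l j) * a * l i)) (hE.1 _)
        rw [← mul_assoc (star (l j)), mul_assoc (l j), ← this]
        simp only [mul_assoc]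
    _ = (∑ i, l i * x * star (l i)) * a := by
        rw [Finset.sum_mul]
        refine Finset.sum_congr rfl fun j _ => ?_
        rw [← hl (star (l j) * a)]
        simp only [mul_assoc]

/-! ### First-order consequences of minimality -/

/-- First-order condition at the minimum `t = 0` of `t ↦ L₁ (exp (t x)) * L₂ (exp (-t x))`. -/
lemma exp_variation (L₁ L₂ : R →L[ℝ] ℝ) (x : R)
    (h : ∀ t : ℝ, L₁ 1 * L₂ 1 ≤
      L₁ (NormedSpace.exp (t • x)) * L₂ (NormedSpace.exp (t • -x))) :
    L₁ x * L₂ 1 = L₁ 1 * L₂ x := by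
  have d₁ : HasDerivAt (fun t : ℝ => L₁ (NormedSpace.exp (t • x))) (L₁ x) 0 := by
    have := L₁.hasFDerivAt.comp_hasDerivAt (0 : ℝ) (hasDerivAt_exp_smul_const (𝕂 := ℝ) x 0)
    simpa [Function.comp_def] using this
  have d₂ : HasDerivAt (fun t : ℝ => L₂ (NormedSpace.exp (t • -x))) (L₂ (-x)) 0 := by
    have := L₂.hasFDerivAt.comp_hasDerivAt (0 : ℝ) (hasDerivAt_exp_smul_const (𝕂 := ℝ) (-x) 0)
    simpa [Function.comp_def] using this
  have d := d₁.mul d₂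
  have hmin : IsLocalMin ((fun t : ℝ => L₁ (NormedSpace.exp (t • x))) *
      fun t : ℝ => L₂ (NormedSpace.exp (t • -x))) 0 := by
    refine Filter.Eventually.of_forall fun t => ?_
    simpa using h t
  have := hmin.hasDerivAt_eq_zero d
  simp at this
  linarith

/-- `E` is a conditional expectation onto `B` of scalar index `r`, realised by the quasi-basis
`l`, and `r` is the least scalar index of a conditional expectation onto `B`. -/
structure MinWith (B : Set R) (E : R →ₗ[ℂ] R) (r : ℝ) {n : ℕ} (l : Fin n → R) : Prop where
  condExp : IsCondExp B E
  qb : IsRightQB E l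
  index : ∑ i, l i * star (l i) = (r : ℂ) • 1
  le : ∀ E : R →ₗ[ℂ] R, IsCondExp B E → ∀ (m : ℕ) (μ : Fin m → R), IsRightQB E μ →
      ∀ r₁ : ℝ, (∑ i, μ i * star (μ i)) = (r₁ : ℂ) • 1 → r ≤ r₁

/-- Comparing the index of `E` with that of `y ↦ s⁻¹ E (k y k)`, where `s = E (k * k)`
and `k` is an invertible self-adjoint element of the relative commutant. -/
lemma MinWith.le_perturb [Nontrivial R] {r : ℝ} {n : ℕ} {l : Fin n → R}
    (h : MinWith (B : Set R) E r l) {k k' : R} (hk : k ∈ cent (B : Set R))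
    (hsk : star k = k) (hsk' : star k' = k') (hkk' : k * k' = 1) (hk'k : k' * k = 1)
    {s d : ℝ} (hs0 : 0 < s) (hs : E (k * k) = (s : ℂ) • 1)
    (hd : ∑ i, l i * (k' * k') * star (l i) = (d : ℂ) • 1) : r ≤ s * d := by
  have hE := h.condExp
  have hk' : k' ∈ cent (B : Set R) := by
    intro b hb
    calc k' * b = k' * (b * k) * k' := by simp [mul_assoc, hkk']
      _ = b * k' := by rw [← hk b hb, ← mul_assoc, hk'k, one_mul]
  have hsC : (s : ℂ) ≠ 0 := by exact_mod_cast hs0.ne'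
  have hsq : ((√s : ℝ) : ℂ) * ((√s : ℝ) : ℂ) = s := by
    rw [← Complex.ofReal_mul, Real.mul_self_sqrt hs0.le]
  have hsq0 : ((√s : ℝ) : ℂ) ≠ 0 := by
    exact_mod_cast (Real.sqrt_pos.mpr hs0).ne'
  let F : R →ₗ[ℂ] R := (s : ℂ)⁻¹ • (E ∘ₗ LinearMap.mulLeft ℂ k ∘ₗ LinearMap.mulRight ℂ k)
  have hF : ∀ y, F y = (s : ℂ)⁻¹ • E (k * (y * k)) := fun y => rfl
  have hFB : IsCondExp (B : Set R) F := by
    refine ⟨fun x => ?_, fun b hb => ?_, fun x => ?_, fun b₁ hb₁ b₂ hb₂ x => ?_⟩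
    · exact B.smul_mem (hE.1 _) _
    · rw [hF, ← hk b hb, ← mul_assoc, hE.map_mul_right hb, hs, smul_mul_assoc, one_mul,
        smul_smul, inv_mul_cancel₀ hsC, one_smul]
    · obtain ⟨y, hy⟩ := hE.2.2.1 (x * k)
      refine ⟨((√s : ℝ) : ℂ)⁻¹ • y, ?_⟩
      rw [hF]
      have : k * (star x * x * k) = star (x * k) * (x * k) := by
        simp [hsk, mul_assoc]
      rw [this, hy, star_smul, smul_mul_smul_comm, ← hsq, mul_inv]
      simp
    · rw [hF, hF]
      have : k * (b₁ * x * b₂ * k) = b₁ * (k * (x * k)) * b₂ := by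
        simp only [mul_assoc]
        rw [← hk b₂ hb₂, ← mul_assoc, hk b₁ hb₁]
        simp only [mul_assoc]
      rw [this, hE.2.2.2 b₁ hb₁ b₂ hb₂, mul_smul_comm, smul_mul_assoc]
  refine h.le F hFB n (fun i => ((√s : ℝ) : ℂ) • (l i * k')) (fun x => ?_) (s * d) ?_
  · calc x = k' * (k * x) := by rw [← mul_assoc, hk'k, one_mul]
      _ = k' * ∑ i, E (k * x * l i) * star (l i) := by rw [← h.qb (k * x)]
      _ = _ := by
        rw [Finset.mul_sum]
        refine Finset.sum_congr rfl fun i _ => ?_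
        have h1 : k * (x * (((√s : ℝ) : ℂ) • (l i * k')) * k)
            = ((√s : ℝ) : ℂ) • (k * x * l i) := by
          simp [mul_assoc, hk'k]
        rw [hF, h1, map_smul, star_smul, star_mul, hsk', smul_smul, smul_mul_smul_comm,
          Complex.star_def, Complex.conj_ofReal, mul_assoc (s : ℂ)⁻¹, hsq, inv_mul_cancel₀ hsC, one_smul,
          ← mul_assoc, ← mul_assoc, hk' _ (hE.1 _)]
  · have : ∀ i, ((√s : ℝ) : ℂ) • (l i * k') * star (((√s : ℝ) : ℂ) • (l i * k'))
        = (s : ℂ) • (l i * (k' * k') * star (l i)) := by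
      intro i
      rw [star_smul, star_mul, hsk', smul_mul_smul_comm, Complex.star_def, Complex.conj_ofReal, hsq]
      simp only [mul_assoc]
    simp only [this]
    rw [← Finset.smul_sum, hd, smul_smul]
    push_cast
    rfl

lemma MinWith.index_ne_zero [Nontrivial R] {r : ℝ} {n : ℕ} {l : Fin n → R}
    (h : MinWith (B : Set R) E r l) : r ≠ 0 := by
  rintro rfl
  have h0 : ∑ i, l i * star (l i) = 0 := by simpa using h.index
  have h1 : ∀ i, l i = 0 := by
    intro i
    have := (Finset.sum_eq_zero_iff_of_nonneg fun i _ => mul_star_self_nonneg (l i)).mp h0 i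
      (Finset.mem_univ i)
    exact (CStarRing.mul_star_self_eq_zero_iff _).mp this
  have := h.qb 1
  simp [h1] at this

/-- Stationarity of the index: on the relative commutant, the functional
`x ↦ ∑ i, l i * x * (l i)*` is the multiple `r • E` of the expectation. For self-adjoint
`x` this is the first-order condition for the perturbations of `E` by `k = exp (t x / 2)`. -/
lemma MinWith.stationary [Nontrivial R] {r : ℝ} {n : ℕ} {l : Fin n → R}
    (h : MinWith (B : Set R) E r l) (hcl : IsClosed (B : Set R))
    (hR : IsSimpleCStar (Set.univ : Set R)) (hB : IsSimpleCStar (B : Set R))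
    {x : R} (hx : x ∈ cent (B : Set R)) :
    ∑ i, l i * x * star (l i) = (r : ℂ) • E x := by
  have hE := h.condExp
  let Θ : R →L[ℂ] R := ∑ i, (ContinuousLinearMap.mul ℂ R (l i)).comp
    ((ContinuousLinearMap.mul ℂ R).flip (star (l i)))
  have hΘ : ∀ y, Θ y = ∑ i, l i * y * star (l i) := by
    intro y
    simp [Θ, mul_assoc]
  let E' : R →L[ℂ] R := ⟨E, hE.continuous⟩
  have hE' : ∀ y, E' y = E y := fun y => rfl
  -- A normalised functional reads off the scalar values of `E` and `Θ`.
  obtain ⟨φ, hφ⟩ := SeparatingDual.exists_eq_one (R := ℂ) (one_ne_zero : (1 : R) ≠ 0)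
  have hsa : ∀ y : R, star y = y → y ∈ cent (B : Set R) → Θ y = (r : ℂ) • E y := by
    intro y hy hyc
    let L₁ : R →L[ℝ] ℝ := Complex.reCLM.comp ((φ.comp E').restrictScalars ℝ)
    let L₂ : R →L[ℝ] ℝ := Complex.reCLM.comp ((φ.comp Θ).restrictScalars ℝ)
    have hL₁ : ∀ w, L₁ w = (φ (E w)).re := fun w => rfl
    have hL₂ : ∀ w, L₂ w = (φ (Θ w)).re := fun w => rfl
    have hΘ1 : Θ 1 = (r : ℂ) • 1 := by rw [hΘ]; simpa using h.index
    have hL₁1 : L₁ 1 = 1 := by rw [hL₁, hE.map_one, hφ]; simp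
    have hL₂1 : L₂ 1 = r := by rw [hL₂, hΘ1, map_smul, hφ]; simp
    have key := exp_variation L₁ L₂ y (by
      intro t
      rw [hL₁1, hL₂1, one_mul]
      let _ : NormedAlgebra ℚ R := .restrictScalars ℚ ℂ R
      set z : R := (t / 2) • y with hz
      have hzs : star z = z := by simp [hz, hy]
      have hzc : z ∈ cent (B : Set R) := by
        have := cent_smul hyc ((t / 2 : ℝ) : ℂ)
        rwa [Complex.coe_smul] at this
      have hzc' : -z ∈ cent (B : Set R) := by simpa using cent_smul hzc (-1)
      have e1 : NormedSpace.exp (t • y) = NormedSpace.exp z * NormedSpace.exp z := by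
        rw [← NormedSpace.exp_add_of_commute (Commute.refl z), hz, ← add_smul]
        ring_nf
      have e2 : NormedSpace.exp (t • -y) = NormedSpace.exp (-z) * NormedSpace.exp (-z) := by
        rw [← NormedSpace.exp_add_of_commute (Commute.refl (-z)), hz, ← smul_neg, ← add_smul]
        ring_nf
      have e3 : NormedSpace.exp z * NormedSpace.exp (-z) = 1 := by
        rw [← NormedSpace.exp_add_of_commute (Commute.refl z).neg_right, add_neg_cancel,
          NormedSpace.exp_zero]
      have e4 : NormedSpace.exp (-z) * NormedSpace.exp z = 1 := by
        rw [← NormedSpace.exp_add_of_commute (Commute.refl z).neg_left, neg_add_cancel,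
          NormedSpace.exp_zero]
      have hks : star (NormedSpace.exp z) = NormedSpace.exp z := by
        rw [NormedSpace.star_exp, hzs]
      have hks' : star (NormedSpace.exp (-z)) = NormedSpace.exp (-z) := by
        rw [NormedSpace.star_exp, star_neg, hzs]
      rw [e1, e2]
      have hkc := cent_exp hzc
      have hkc' := cent_exp hzc'
      revert hks hks' e3 e4 hkc hkc'
      generalize NormedSpace.exp z = k
      generalize NormedSpace.exp (-z) = k'
      intro e3 e4 hks hks' hkc hkc'
      obtain ⟨cs, hcs⟩ := hE.scalar hcl hB (cent_mul hkc hkc)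
      obtain ⟨cd, hcd⟩ := h.qb.scalar hE hR (cent_mul hkc' hkc')
      have hn1 : 0 ≤ cs • (1 : R) := by
        rw [← hcs]
        refine hE.map_nonneg ?_
        have := star_mul_self_nonneg k
        rwa [hks] at this
      have hn2 : 0 ≤ cd • (1 : R) := by
        rw [← hcd]
        refine Finset.sum_nonneg fun i _ => ?_
        have := mul_star_self_nonneg (l i * k')
        rw [star_mul, hks'] at this
        simpa only [mul_assoc] using this
      obtain ⟨s, hs0, rfl⟩ := exists_real_of_smul_one_nonneg hn1
      obtain ⟨d, hd0, rfl⟩ := exists_real_of_smul_one_nonneg hn2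
      have hspos : 0 < s := by
        refine lt_of_le_of_ne hs0 ?_
        rintro rfl
        have hk0 : k = 0 := hE.faithful h.qb (by rw [hks, hcs]; simp)
        rw [hk0, zero_mul] at e3
        exact zero_ne_one e3
      have := h.le_perturb hkc hks hks' e3 e4 hspos hcs hcd
      rw [hL₁, hL₂, hΘ, hcs, hcd, map_smul, map_smul, hφ]
      simpa using this)
    rw [hL₁1, hL₂1, one_mul, hL₁, hL₂] at key
    obtain ⟨a, ha⟩ := hE.scalar hcl hB hyc
    obtain ⟨b, hb⟩ := h.qb.scalar hE hR hyc
    have hinj : Function.Injective fun z : ℂ => z • (1 : R) := smul_left_injective ℂ one_ne_zero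
    have ha' : star a = a := by
      apply hinj
      have := congrArg star ha
      rw [← hE.map_star, hy, ha] at this
      simpa using this.symm
    have hb' : star b = b := by
      apply hinj
      have := congrArg star hb
      rw [star_sum] at this
      simp only [star_mul, star_star, hy, ← mul_assoc] at this
      rw [hb] at this
      simpa using this.symm
    rw [hΘ, hb, ha] at key
    rw [hΘ, hb, ha, smul_smul]
    simp only [map_smul, hφ, smul_eq_mul, mul_one] at key
    congr 1
    rw [← Complex.conj_eq_iff_re.mp ha', ← Complex.conj_eq_iff_re.mp hb', ← key]
    push_cast
    ring
  -- Decompose `x` into its self-adjoint real and imaginary parts.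
  rw [← hΘ, ← realPart_add_I_smul_imaginaryPart x]
  rw [map_add, map_add, map_smul, map_smul, hsa _ (realPart x).2 (cent_realPart hx),
    hsa _ (imaginaryPart x).2 (cent_imaginaryPart hx),
    smul_add, smul_comm]

/-! ### Uniqueness of the minimal expectation and its invariance under the normalizer -/

/-- Two conditional expectations of the same minimal index coincide. The second one is `E (· d)`
with `d` in the relative commutant; stationarity of both gives `E' ((1 - d) (1 - d)*) = 0`. -/
lemma MinWith.unique [Nontrivial R] {E' : R →ₗ[ℂ] R} {r : ℝ} {n n' : ℕ} {l : Fin n → R}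
    {l' : Fin n' → R} (h : MinWith (B : Set R) E r l) (h' : MinWith (B : Set R) E' r l')
    (hcl : IsClosed (B : Set R)) (hR : IsSimpleCStar (Set.univ : Set R))
    (hB : IsSimpleCStar (B : Set R)) (x : R) : E' x = E x := by
  have hE := h.condExp
  have hE' := h'.condExp
  set d : R := ∑ i, l i * E' (star (l i)) with hd
  have hEd : ∀ y, E' y = E (y * d) := by
    intro y
    conv_lhs => rw [h.qb y]
    simp only [hd, map_sum, Finset.mul_sum]
    refine Finset.sum_congr rfl fun i _ => ?_
    rw [hE'.map_mul_left (hE.1 _), ← mul_assoc, hE.map_mul_right (hE'.1 _)]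
  have hdc : d ∈ cent (B : Set R) := by
    intro b hb
    refine sub_eq_zero.mp (hE.faithful h.qb ?_)
    generalize star (d * b - b * d) = y
    rw [mul_sub, map_sub, ← mul_assoc, ← mul_assoc, hE.map_mul_right hb, ← hEd, ← hEd,
      hE'.map_mul_right hb, sub_self]
  have hΘ : ∀ y ∈ cent (B : Set R),
      ∑ i, l' i * (d * y) * star (l' i) = ∑ j, l j * y * star (l j) := by
    intro y hy
    calc ∑ i, l' i * (d * y) * star (l' i)
        = ∑ i, (∑ j, l j * E' (star (l j) * l' i)) * y * star (l' i) := by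
          refine Finset.sum_congr rfl fun i _ => ?_
          rw [← mul_assoc, h.qb.expand hE (l' i * d)]
          simp only [hEd, mul_assoc]
      _ = ∑ j, l j * y * ∑ i, E' (star (l j) * l' i) * star (l' i) := by
          simp only [Finset.sum_mul, Finset.mul_sum]
          rw [Finset.sum_comm]
          refine Finset.sum_congr rfl fun j _ => Finset.sum_congr rfl fun i _ => ?_
          rw [mul_assoc (l j), ← hy _ (hE'.1 _)]
          simp only [mul_assoc]
      _ = ∑ j, l j * y * star (l j) := by
          refine Finset.sum_congr rfl fun j _ => ?_
          rw [← h'.qb (star (l j))]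
  have hτ : ∀ y ∈ cent (B : Set R), E' (d * y) = E y := by
    intro y hy
    have := hΘ y hy
    rw [h.stationary hcl hR hB hy, h'.stationary hcl hR hB (cent_mul hdc hy)] at this
    exact smul_right_injective R (by exact_mod_cast h.index_ne_zero : (r : ℂ) ≠ 0) this
  have h1 : E' d = 1 := by simpa [hE.map_one] using hτ 1 cent_one
  have h2 : E' (star d) = 1 := by rw [hE'.map_star, h1, star_one]
  have h3 : E' (d * star d) = 1 := by
    rw [hτ _ (cent_star hdc), hE.map_star]
    have := hEd 1
    rw [hE'.map_one, one_mul] at this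
    rw [← this, star_one]
  have h4 : star (1 - d) = 0 := by
    refine hE'.faithful h'.qb ?_
    have : star (star (1 - d)) * star (1 - d) = 1 - star d - d + d * star d := by
      simp [mul_sub, sub_mul]
      abel
    rw [this, map_add, map_sub, map_sub, h1, h2, h3, hE'.map_one]
    simp
  have h5 : d = 1 := by
    have := star_eq_zero.mp h4
    exact (sub_eq_zero.mp this).symm
  rw [hEd, h5, mul_one]

/-- Unitaries normalizing `B`, with the two inclusions `u B u* ⊆ B` and `u* B u ⊆ B` spelled out. -/
structure Normalizes (B : StarSubalgebra ℂ R) (u : R) : Prop where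
  left : star u * u = 1
  right : u * star u = 1
  conj : ∀ b ∈ B, u * b * star u ∈ B
  conj' : ∀ b ∈ B, star u * b * u ∈ B

lemma normalizes_iff {u : R} : Normalizes B u ↔ u ∈ normalizer (B : Set R) := by
  constructor
  · intro h
    refine ⟨Unitary.mem_iff.mpr ⟨h.left, h.right⟩, Set.Subset.antisymm ?_ fun b hb => ?_⟩
    · rintro _ ⟨b, hb, rfl⟩
      exact h.conj b hb
    · refine ⟨star u * b * u, h.conj' b hb, ?_⟩
      calc u * (star u * b * u) * star u = (u * star u) * b * (u * star u) := by
            simp only [mul_assoc]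
        _ = b := by rw [h.right]; simp
  · rintro ⟨hu, hB⟩
    obtain ⟨h1, h2⟩ := Unitary.mem_iff.mp hu
    refine ⟨h1, h2, fun b hb => ?_, fun b hb => ?_⟩
    · have : u * b * star u ∈ (fun x => u * x * star u) '' (B : Set R) := ⟨b, hb, rfl⟩
      rwa [hB] at this
    · have : b ∈ (fun x => u * x * star u) '' (B : Set R) := by rw [hB]; exact hb
      obtain ⟨c, hc, rfl⟩ := this
      have : star u * (u * c * star u) * u = (star u * u) * c * (star u * u) := by
        simp only [mul_assoc]
      show star u * (u * c * star u) * u ∈ B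
      rw [this, h1]
      simpa using hc

lemma Normalizes.one : Normalizes B (1 : R) := ⟨by simp, by simp, by simp, by simp⟩

lemma Normalizes.mul {u w : R} (hu : Normalizes B u) (hw : Normalizes B w) :
    Normalizes B (u * w) := by
  refine ⟨?_, ?_, fun b hb => ?_, fun b hb => ?_⟩
  · calc star (u * w) * (u * w) = star w * (star u * u) * w := by simp [mul_assoc]
      _ = 1 := by rw [hu.left, mul_one, hw.left]
  · calc u * w * star (u * w) = u * (w * star w) * star u := by simp [mul_assoc]
      _ = 1 := by rw [hw.right, mul_one, hu.right]
  · simpa [mul_assoc] using hu.conj _ (hw.conj b hb)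
  · simpa [mul_assoc] using hw.conj' _ (hu.conj' b hb)

lemma Normalizes.star {u : R} (hu : Normalizes B u) : Normalizes B (star u) :=
  ⟨by simpa using hu.right, by simpa using hu.left, by simpa using hu.conj', by simpa using hu.conj⟩

/-- By uniqueness, the minimal expectation is equivariant under the normalizer, since
`x ↦ u* E (u x u*) u` is an expectation of the same index. -/
lemma MinWith.conj [Nontrivial R] {r : ℝ} {n : ℕ} {l : Fin n → R}
    (h : MinWith (B : Set R) E r l) (hcl : IsClosed (B : Set R))
    (hR : IsSimpleCStar (Set.univ : Set R)) (hB : IsSimpleCStar (B : Set R)) {u : R}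
    (hu : Normalizes B u) (x : R) : E (u * x * star u) = u * E x * star u := by
  have hE := h.condExp
  have c1 : ∀ y, star u * (u * y) = y := fun y => by rw [← mul_assoc, hu.left, one_mul]
  have c2 : ∀ y, u * (star u * y) = y := fun y => by rw [← mul_assoc, hu.right, one_mul]
  let F : R →ₗ[ℂ] R := LinearMap.mulLeft ℂ (star u) ∘ₗ LinearMap.mulRight ℂ u ∘ₗ E ∘ₗ
    LinearMap.mulLeft ℂ u ∘ₗ LinearMap.mulRight ℂ (star u)
  have hF : ∀ y, F y = star u * (E (u * (y * star u)) * u) := fun y => rfl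
  have hFmin : MinWith (B : Set R) F r (fun i => star u * l i * u) := by
    refine ⟨⟨fun x => ?_, fun b hb => ?_, fun x => ?_, fun b₁ hb₁ b₂ hb₂ x => ?_⟩,
      fun x => ?_, ?_, h.le⟩
    · rw [hF, ← mul_assoc]
      exact hu.conj' _ (hE.1 _)
    · rw [hF, ← mul_assoc u, hE.2.1 _ (hu.conj b hb)]
      simp only [mul_assoc, hu.left, c1, mul_one]
    · obtain ⟨y, hy⟩ := hE.2.2.1 (x * star u)
      refine ⟨y * u, ?_⟩
      have : u * (star x * x * star u) = star (x * star u) * (x * star u) := by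
        simp [mul_assoc]
      rw [hF, this, hy]
      simp [mul_assoc]
    · have : u * (b₁ * x * b₂ * star u)
          = (u * b₁ * star u) * (u * (x * star u)) * (u * b₂ * star u) := by
        simp only [mul_assoc, c1]
      rw [hF, hF, this, hE.2.2.2 _ (hu.conj _ hb₁) _ (hu.conj _ hb₂)]
      simp only [mul_assoc, c1, hu.left, mul_one]
    · calc x = star u * (u * x * star u) * u := by simp only [mul_assoc, c1, hu.left, mul_one]
        _ = star u * (∑ i, E (u * x * star u * l i) * star (l i)) * u := by
          rw [← h.qb (u * x * star u)]
        _ = _ := by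
          rw [Finset.mul_sum, Finset.sum_mul]
          refine Finset.sum_congr rfl fun i _ => ?_
          rw [hF]
          simp only [star_mul, star_star, mul_assoc, c2, hu.right, mul_one]
    · have : ∀ i, star u * l i * u * star (star u * l i * u)
          = star u * (l i * star (l i)) * u := by
        intro i
        simp only [star_mul, star_star, mul_assoc, c2]
      simp only [this]
      rw [← Finset.sum_mul, ← Finset.mul_sum, h.index]
      simp [hu.left]
  have := h.unique hFmin hcl hR hB x
  rw [← this, hF]
  simp only [mul_assoc, c2, hu.right, mul_one]

/-- The minimal expectation is tracial relative to the relative commutant: for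
self-adjoint `x` differentiate `t ↦ E (exp (i t x) y exp (-i t x))`, which is constant by equivariance. -/
lemma MinWith.tracial [Nontrivial R] {r : ℝ} {n : ℕ} {l : Fin n → R}
    (h : MinWith (B : Set R) E r l) (hcl : IsClosed (B : Set R))
    (hR : IsSimpleCStar (Set.univ : Set R)) (hB : IsSimpleCStar (B : Set R)) {x : R}
    (hx : x ∈ cent (B : Set R)) (y : R) : E (x * y) = E (y * x) := by
  have hE := h.condExp
  have hsa : ∀ x : R, star x = x → x ∈ cent (B : Set R) → E (x * y) = E (y * x) := by
    intro x hxs hx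
    let _ : NormedAlgebra ℚ R := .restrictScalars ℚ ℂ R
    set X : R := Complex.I • x with hX
    have hXs : star X = -X := by simp [hX, hxs]
    have hXc : X ∈ cent (B : Set R) := cent_smul hx _
    have hconst : ∀ t : ℝ,
        E (NormedSpace.exp (t • X) * y * NormedSpace.exp (t • -X)) = E y := by
      intro t
      have hc : NormedSpace.exp (t • X) ∈ cent (B : Set R) := by
        apply cent_exp
        have := cent_smul hXc (t : ℂ)
        rwa [Complex.coe_smul] at this
      have hst : NormedSpace.exp (t • -X) = star (NormedSpace.exp (t • X)) := by
        rw [NormedSpace.star_exp, star_smul, hXs]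
        simp
      have e3 : NormedSpace.exp (t • X) * star (NormedSpace.exp (t • X)) = 1 := by
        rw [← hst, smul_neg, ← NormedSpace.exp_add_of_commute (Commute.refl (t • X)).neg_right,
          add_neg_cancel, NormedSpace.exp_zero]
      have e4 : star (NormedSpace.exp (t • X)) * NormedSpace.exp (t • X) = 1 := by
        rw [← hst, smul_neg, ← NormedSpace.exp_add_of_commute (Commute.refl (t • X)).neg_left,
          neg_add_cancel, NormedSpace.exp_zero]
      rw [hst]
      generalize NormedSpace.exp (t • X) = u at hc e3 e4
      have hu : Normalizes B u := by
        refine ⟨e4, e3, fun b hb => ?_, fun b hb => ?_⟩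
        · rw [hc b hb, mul_assoc, e3, mul_one]
          exact hb
        · rw [mul_assoc, ← hc b hb, ← mul_assoc, e4, one_mul]
          exact hb
      rw [h.conj hcl hR hB hu, hc _ (hE.1 _), mul_assoc, e3, mul_one]
    let E' : R →L[ℝ] R := ContinuousLinearMap.restrictScalars ℝ (⟨E, hE.continuous⟩ : R →L[ℂ] R)
    have hE' : ∀ w, E' w = E w := fun w => rfl
    have d₁ := hasDerivAt_exp_smul_const (𝕂 := ℝ) X 0
    have d₂ := hasDerivAt_exp_smul_const (𝕂 := ℝ) (-X) 0
    have d := E'.hasFDerivAt.comp_hasDerivAt (0 : ℝ) ((d₁.mul_const y).mul d₂)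
    have d0 : HasDerivAt (fun _ : ℝ => E y) (0 : R) 0 := hasDerivAt_const _ _
    have hfun : (E' ∘ ((fun t : ℝ => NormedSpace.exp (t • X) * y) *
        fun t : ℝ => NormedSpace.exp (t • -X))) = fun _ : ℝ => E y := by
      funext t
      exact hconst t
    have key := (hfun ▸ d).unique d0
    simp only [zero_smul, NormedSpace.exp_zero, one_mul, mul_one, hE', map_add, mul_neg,
      map_neg] at key
    have key' : E (X * y) = E (y * X) := by
      rw [← sub_eq_zero, sub_eq_add_neg]
      exact key
    rw [hX, smul_mul_assoc, mul_smul_comm, map_smul, map_smul] at key'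
    exact smul_right_injective R Complex.I_ne_zero key'
  rw [← realPart_add_I_smul_imaginaryPart x, add_mul, mul_add, smul_mul_assoc, mul_smul_comm,
    map_add, map_add, map_smul, map_smul, hsa _ (realPart x).2 (cent_realPart hx),
    hsa _ (imaginaryPart x).2 (cent_imaginaryPart hx)]

/-! ### Orthonormal families of elements `u m` -/

/-- Orthonormal families for `E` whose members have the form `u m`, with `u` normalizing `B`
and `m` in the relative commutant of `B`. The factors are part of the data. -/
structure GoodFamily (B : StarSubalgebra ℂ R) (E : R →ₗ[ℂ] R) {m : ℕ} (u c : Fin m → R) :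
    Prop where
  norm : ∀ k, Normalizes B (u k)
  cent : ∀ k, c k ∈ cent (B : Set R)
  ortho : ∀ k j, E (star (u k * c k) * (u j * c j)) = if k = j then 1 else 0

/-- Exchange formula: `E ((u c) y) = u E (y (u c)) u*`. -/
lemma MinWith.exchange [Nontrivial R] {r : ℝ} {n : ℕ} {l : Fin n → R}
    (h : MinWith (B : Set R) E r l) (hcl : IsClosed (B : Set R))
    (hR : IsSimpleCStar (Set.univ : Set R)) (hB : IsSimpleCStar (B : Set R)) {u c : R}
    (hu : Normalizes B u) (hc : c ∈ cent (B : Set R)) (y : R) :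
    E (u * c * y) = u * E (y * (u * c)) * star u := by
  have : u * c * y = u * (c * (y * u)) * star u := by
    simp only [mul_assoc, hu.right, mul_one]
  rw [this, h.conj hcl hR hB hu, h.tracial hcl hR hB hc, mul_assoc y]

/-- Adjoint form of the exchange formula. -/
lemma MinWith.exchange_star [Nontrivial R] {r : ℝ} {n : ℕ} {l : Fin n → R}
    (h : MinWith (B : Set R) E r l) (hcl : IsClosed (B : Set R))
    (hR : IsSimpleCStar (Set.univ : Set R)) (hB : IsSimpleCStar (B : Set R)) {u c : R}
    (hu : Normalizes B u) (hc : c ∈ cent (B : Set R)) (y : R) :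
    E (y * star (u * c)) = u * E (star (u * c) * y) * star u := by
  have e1 : star (E (u * c * star y)) = E (y * star (u * c)) := by
    rw [← h.condExp.map_star, star_mul (u * c), star_star]
  have e2 : star (E (star y * (u * c))) = E (star (u * c) * y) := by
    rw [← h.condExp.map_star, star_mul (star y), star_star]
  rw [← e1, h.exchange hcl hR hB hu hc, star_mul, star_mul u, star_star, e2, mul_assoc]

/-- Bessel's inequality for the `B`-valued inner product `E (x* y)`. -/
lemma bessel (hE : IsCondExp (B : Set R) E) {m : ℕ} {v : Fin m → R}
    (hv : ∀ k j, E (star (v k) * v j) = if k = j then 1 else 0) (x : R) :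
    ∑ k, E (star x * v k) * E (star (v k) * x) ≤ E (star x * x) := by
  set p := ∑ k, v k * E (star (v k) * x) with hp
  set S := ∑ k, E (star x * v k) * E (star (v k) * x) with hS
  have hst : ∀ k, star (E (star (v k) * x)) = E (star x * v k) := by
    intro k
    rw [← hE.map_star]
    simp
  have hvp : ∀ k, E (star (v k) * p) = E (star (v k) * x) := by
    intro k
    rw [hp, Finset.mul_sum, map_sum]
    simp only [← mul_assoc, hE.map_mul_right (hE.1 _), hv]
    simp
  have hpy : ∀ y, E (star p * y) = ∑ k, E (star x * v k) * E (star (v k) * y) := by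
    intro y
    rw [hp, star_sum, Finset.sum_mul, map_sum]
    refine Finset.sum_congr rfl fun k _ => ?_
    rw [star_mul, hst, mul_assoc, hE.map_mul_left (hE.1 _)]
  have h1 : E (star p * x) = S := hpy x
  have h2 : E (star p * p) = S := by
    rw [hpy]
    simp only [hvp, hS]
  have h3 : E (star x * p) = S := by
    rw [hp, Finset.mul_sum, map_sum, hS]
    refine Finset.sum_congr rfl fun k _ => ?_
    rw [← mul_assoc, hE.map_mul_right (hE.1 _)]
  have h4 : 0 ≤ E (star (x - p) * (x - p)) := hE.map_nonneg (star_mul_self_nonneg _)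
  rw [star_sub, sub_mul, mul_sub, mul_sub, map_sub, map_sub, map_sub, h1, h2, h3, sub_self,
    sub_zero] at h4
  exact sub_nonneg.mp h4

/-- The size of a good family is bounded by the index: sum Bessel's inequality over the
quasi-basis, and turn the left-hand side into Parseval's identity with the exchange formula. -/
lemma GoodFamily.card_le [Nontrivial R] {r : ℝ} {n : ℕ} {l : Fin n → R}
    (h : MinWith (B : Set R) E r l) (hcl : IsClosed (B : Set R))
    (hR : IsSimpleCStar (Set.univ : Set R)) (hB : IsSimpleCStar (B : Set R)) {m : ℕ}
    {u c : Fin m → R} (hg : GoodFamily B E u c) : (m : ℝ) ≤ |r| := by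
  have hE := h.condExp
  have h1 : ∑ i, ∑ k, E (l i * (u k * c k)) * E (star (u k * c k) * star (l i))
      ≤ (r : ℂ) • (1 : R) := by
    calc ∑ i, ∑ k, E (l i * (u k * c k)) * E (star (u k * c k) * star (l i))
        ≤ ∑ i, E (l i * star (l i)) := by
          refine Finset.sum_le_sum fun i _ => ?_
          have := bessel hE hg.ortho (star (l i))
          rwa [star_star] at this
      _ = (r : ℂ) • (1 : R) := by rw [← map_sum, h.index, map_smul, hE.map_one]
  have h2 : ∀ k, ∑ i, E (l i * (u k * c k)) * E (star (u k * c k) * star (l i)) = 1 := by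
    intro k
    have hu := hg.norm k
    have c1 : ∀ y, star (u k) * (u k * y) = y := fun y => by rw [← mul_assoc, hu.left, one_mul]
    have c2 : ∀ y, u k * (star (u k) * y) = y := fun y => by rw [← mul_assoc, hu.right, one_mul]
    have ha : ∀ y, E (y * (u k * c k)) = star (u k) * E (u k * c k * y) * u k := by
      intro y
      rw [h.exchange hcl hR hB hu (hg.cent k)]
      simp only [mul_assoc, c1, hu.left, mul_one]
    have hb : ∀ y, E (star (u k * c k) * y) = star (u k) * E (y * star (u k * c k)) * u k := by
      intro y
      rw [h.exchange_star hcl hR hB hu (hg.cent k)]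
      simp only [mul_assoc, c1, hu.left, mul_one]
    calc ∑ i, E (l i * (u k * c k)) * E (star (u k * c k) * star (l i))
        = star (u k) * (∑ i, E (u k * c k * l i) * E (star (l i) * star (u k * c k))) * u k := by
          rw [Finset.mul_sum, Finset.sum_mul]
          refine Finset.sum_congr rfl fun i _ => ?_
          rw [ha, hb]
          simp only [mul_assoc, c2]
      _ = star (u k) * E (u k * c k * star (u k * c k)) * u k := by
          congr 2
          conv_rhs => rw [h.qb (u k * c k)]
          rw [Finset.sum_mul, map_sum, ← h.qb (u k * c k)]
          refine Finset.sum_congr rfl fun i _ => ?_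
          rw [mul_assoc (E _), hE.map_mul_left (hE.1 _)]
      _ = 1 := by
          rw [← hb, hg.ortho, if_pos rfl]
  rw [Finset.sum_comm, Finset.sum_congr rfl fun k _ => h2 k] at h1
  have h3 : (0 : R) ≤ ∑ _k : Fin m, (1 : R) := Finset.sum_nonneg fun _ _ => zero_le_one
  have h4 := CStarAlgebra.norm_le_norm_of_nonneg_of_le h3 h1
  have h5 : ∑ _k : Fin m, (1 : R) = ((m : ℝ) : ℂ) • 1 := by
    simp
    rw [← nsmul_one, Nat.cast_smul_eq_nsmul]
  rw [h5, norm_smul, norm_smul, CStarRing.norm_one] at h4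
  simpa using h4

/-- A good family whose reconstruction formula fails at a normalizing unitary `w` can be enlarged
by the normalised defect `w - ∑ k, v k * E ((v k)* w)`, which again has the form `w m`. -/
lemma GoodFamily.extend [Nontrivial R] {r : ℝ} {n : ℕ} {l : Fin n → R}
    (h : MinWith (B : Set R) E r l) (hcl : IsClosed (B : Set R))
    (hB : IsSimpleCStar (B : Set R)) {m : ℕ}
    {u c : Fin m → R} (hg : GoodFamily B E u c) {w : R} (hw : Normalizes B w)
    (hne : w ≠ ∑ k, u k * c k * E (star (u k * c k) * w)) :
    ∃ u' c' : Fin (m + 1) → R, GoodFamily B E u' c' := by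
  have hE := h.condExp
  set q := w - ∑ k, u k * c k * E (star (u k * c k) * w) with hq
  have hq0 : q ≠ 0 := sub_ne_zero.mpr hne
  have horth : ∀ k, E (star (u k * c k) * q) = 0 := by
    intro k
    rw [hq, mul_sub, map_sub, Finset.mul_sum, map_sum]
    have this : ∀ j, E (star (u k * c k) * (u j * c j * E (star (u j * c j) * w)))
        = (if k = j then 1 else 0) * E (star (u j * c j) * w) := fun j => by
      rw [← mul_assoc (star (u k * c k)), hE.map_mul_right (hE.1 _), hg.ortho]
    simp only [this, ite_mul, one_mul, zero_mul, Finset.sum_ite_eq, Finset.mem_univ, if_true,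
      sub_self]
  -- Every summand of `q` intertwines the identity of `B` with conjugation by `w`.
  have hint : ∀ b ∈ B, q * b = w * b * star w * q := by
    intro b hb
    have hterm : ∀ k, u k * c k * E (star (u k * c k) * w) * b
        = w * b * star w * (u k * c k * E (star (u k * c k) * w)) := by
      intro k
      have hu := hg.norm k
      have hc := hg.cent k
      have hβ := hw.conj b hb
      have hwb : w * b = w * b * star w * w := by rw [mul_assoc _ (star w), hw.left, mul_one]
      have hEb : E (star (u k * c k) * w) * b
          = E (star (u k * c k) * (w * b * star w * w)) := by
        rw [← hwb, ← mul_assoc, hE.map_mul_right hb]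
      rw [mul_assoc (u k * c k), hEb]
      clear hwb hEb
      revert hβ
      generalize w * b * star w = β
      intro hβ
      have hβ' := hu.conj' β hβ
      have e1 : β * (u k * c k) = u k * c k * (star (u k) * β * u k) := by
        calc β * (u k * c k) = u k * star (u k) * β * (u k * c k) := by rw [hu.right, one_mul]
          _ = u k * (star (u k) * β * u k * c k) := by simp only [mul_assoc]
          _ = u k * (c k * (star (u k) * β * u k)) := by rw [hc _ hβ']
          _ = _ := by rw [mul_assoc (u k) (c k)]
      have e2 : star (u k * c k) * β = star (u k) * β * u k * star (u k * c k) := by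
        calc star (u k * c k) * β = star (c k) * (star (u k) * β * (u k * star (u k))) := by
              rw [hu.right, mul_one, star_mul, mul_assoc]
          _ = star (c k) * (star (u k) * β * u k) * star (u k) := by simp only [mul_assoc]
          _ = _ := by rw [cent_star hc _ hβ', star_mul, mul_assoc]
      rw [← mul_assoc (star (u k * c k)), e2, mul_assoc _ (star (u k * c k)),
        hE.map_mul_left hβ', ← mul_assoc, ← e1, mul_assoc]
    rw [hq, sub_mul, mul_sub, Finset.sum_mul, Finset.mul_sum]
    congr 1
    · rw [mul_assoc _ (star w), hw.left, mul_one]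
    · exact Finset.sum_congr rfl fun k _ => hterm k
  set d := star w * q with hd
  have hwd : w * d = q := by rw [hd, ← mul_assoc, hw.right, one_mul]
  have hdc : d ∈ RegularInclusion.cent (B : Set R) := by
    intro b hb
    rw [hd, mul_assoc, hint b hb]
    simp only [← mul_assoc, hw.left, one_mul]
  have hqq : star q * q = star d * d := by
    rw [← hwd, star_mul, mul_assoc, ← mul_assoc (star w), hw.left, one_mul]
  obtain ⟨cs, hcs⟩ := hE.scalar hcl hB (cent_mul (cent_star hdc) hdc)
  have hn : 0 ≤ cs • (1 : R) := by
    rw [← hcs]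
    exact hE.map_nonneg (star_mul_self_nonneg d)
  obtain ⟨s, hs0, rfl⟩ := exists_real_of_smul_one_nonneg hn
  have hspos : 0 < s := by
    refine lt_of_le_of_ne hs0 ?_
    rintro rfl
    exact hq0 (hE.faithful h.qb (by rw [hqq, hcs]; simp))
  have hsC : (s : ℂ) ≠ 0 := by exact_mod_cast hspos.ne'
  set a : ℂ := ((√s : ℝ) : ℂ)⁻¹ with ha
  have haa : star a * a = (s : ℂ)⁻¹ := by
    rw [ha, Complex.star_def, map_inv₀, Complex.conj_ofReal, ← mul_inv, ← Complex.ofReal_mul,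
      Real.mul_self_sqrt hs0]
  have hwad : w * (a • d) = a • q := by rw [mul_smul_comm, hwd]
  refine ⟨Fin.snoc (α := fun _ => R) u w, Fin.snoc (α := fun _ => R) c (a • d), ?_, ?_, ?_⟩
  · intro k
    refine Fin.lastCases ?_ (fun k => ?_) k
    · simpa using hw
    · simpa using hg.norm k
  · intro k
    refine Fin.lastCases ?_ (fun k => ?_) k
    · simpa using cent_smul hdc a
    · simpa using hg.cent k
  · intro k j
    refine Fin.lastCases ?_ (fun k => ?_) k <;> refine Fin.lastCases ?_ (fun j => ?_) j
    · simp only [Fin.snoc_last, if_true]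
      rw [hwad, star_smul, smul_mul_smul_comm, haa, map_smul, hqq, hcs, smul_smul,
        inv_mul_cancel₀ hsC, one_smul]
    · simp only [Fin.snoc_last, Fin.snoc_castSucc]
      rw [if_neg (Fin.castSucc_lt_last j).ne', hwad, star_smul, smul_mul_assoc, map_smul]
      have := congrArg star (horth j)
      rw [← hE.map_star, star_mul, star_star, star_zero] at this
      rw [this, smul_zero]
    · simp only [Fin.snoc_last, Fin.snoc_castSucc]
      rw [if_neg (Fin.castSucc_lt_last k).ne, hwad, mul_smul_comm, map_smul, horth, smul_zero]
    · simp only [Fin.snoc_castSucc, Fin.castSucc_inj]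
      exact hg.ortho k j

/-- Some good family reconstructs every normalizing unitary. -/
lemma MinWith.exists_goodFamily [Nontrivial R] {r : ℝ} {n : ℕ} {l : Fin n → R}
    (h : MinWith (B : Set R) E r l) (hcl : IsClosed (B : Set R))
    (hR : IsSimpleCStar (Set.univ : Set R)) (hB : IsSimpleCStar (B : Set R)) :
    ∃ (m : ℕ) (u c : Fin m → R), GoodFamily B E u c ∧
      ∀ w, Normalizes B w → w = ∑ k, u k * c k * E (star (u k * c k) * w) := by
  by_contra hcon
  push Not at hcon
  have hall : ∀ m : ℕ, ∃ u c : Fin m → R, GoodFamily B E u c := by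
    intro m
    induction m with
    | zero => exact ⟨0, 0, fun k => k.elim0, fun k => k.elim0, fun k => k.elim0⟩
    | succ m ih =>
      obtain ⟨u, c, hg⟩ := ih
      obtain ⟨w, hw, hne⟩ := hcon m u c hg
      exact hg.extend h hcl hB hw hne
  obtain ⟨m, hm⟩ := exists_nat_gt |r|
  obtain ⟨u, c, hg⟩ := hall m
  exact absurd (hg.card_le h hcl hR hB) (not_le.mpr hm)

/-- In a regular inclusion the linear span of the normalizer is dense. -/
lemma dense_span_normalizer (hreg : IsRegular (B : Set R)) :
    closure (Submodule.span ℂ (normalizer (B : Set R)) : Set R) = Set.univ := by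
  let N : Submonoid R :=
    { carrier := normalizer (B : Set R)
      one_mem' := normalizes_iff.mp Normalizes.one
      mul_mem' := fun ha hb =>
        normalizes_iff.mp ((normalizes_iff.mpr ha).mul (normalizes_iff.mpr hb)) }
  have hstar : star (normalizer (B : Set R)) = normalizer (B : Set R) := by
    ext x
    rw [Set.mem_star, ← normalizes_iff, ← normalizes_iff]
    exact ⟨fun hx => by simpa using hx.star, fun hx => hx.star⟩
  have hspan : ((StarAlgebra.adjoin ℂ (normalizer (B : Set R)) : StarSubalgebra ℂ R) : Set R)
      = (Submodule.span ℂ (normalizer (B : Set R)) : Set R) := by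
    have h1 : (StarAlgebra.adjoin ℂ (normalizer (B : Set R))).toSubalgebra
        = Algebra.adjoin ℂ (normalizer (B : Set R)) := by
      rw [StarAlgebra.adjoin_toSubalgebra, hstar, Set.union_self]
    have h2 := Algebra.adjoin_eq_span ℂ (normalizer (B : Set R))
    have h3 : Submonoid.closure (normalizer (B : Set R)) = N := Submonoid.closure_eq N
    rw [h3, ← h1] at h2
    exact congrArg (fun S : Submodule ℂ R => (S : Set R)) h2
  have := congrArg (fun S : StarSubalgebra ℂ R => (S : Set R)) hreg
  simpa [StarSubalgebra.topologicalClosure_coe, hspan] using this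

/-- The expansion `x = ∑ k, v k * E ((v k)* x)` passes from the normalizer to all of `R` by density.
Its adjoint is the right quasi-basis property, and the exchange formula turns it, term by term,
into the left one. -/
lemma two_sided_basis [Nontrivial R] {r : ℝ} {n : ℕ} {l : Fin n → R}
    (h : MinWith (B : Set R) E r l) (hcl : IsClosed (B : Set R))
    (hR : IsSimpleCStar (Set.univ : Set R)) (hB : IsSimpleCStar (B : Set R))
    (hreg : IsRegular (B : Set R)) :
    ∃ (m : ℕ) (v : Fin m → R),
      (∀ k j, E (star (v k) * v j) = if k = j then (1 : R) else 0) ∧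
      (∀ x : R, x = ∑ k, E (x * v k) * star (v k)) ∧
      (∀ x : R, x = ∑ k, E (x * star (v k)) * v k) := by
  have hE := h.condExp
  obtain ⟨m, u, c, hg, hrec⟩ := h.exists_goodFamily hcl hR hB
  have hx : ∀ x : R, x = ∑ k, u k * c k * E (star (u k * c k) * x) := by
    intro x
    have hclosed : IsClosed {x : R | x = ∑ k, u k * c k * E (star (u k * c k) * x)} := by
      refine isClosed_eq continuous_id (continuous_finsetSum _ fun k _ => ?_)
      exact continuous_const.mul (hE.continuous.comp (continuous_const.mul continuous_id))
    have hsub : (Submodule.span ℂ (normalizer (B : Set R)) : Set R)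
        ⊆ {x : R | x = ∑ k, u k * c k * E (star (u k * c k) * x)} := by
      intro y hy
      refine Submodule.span_induction (fun w hw => hrec w (normalizes_iff.mpr hw)) (by simp)
        (fun a b _ _ ha hb => ?_) (fun t a _ ha => ?_) hy
      · have ha : a = ∑ k, u k * c k * E (star (u k * c k) * a) := ha
        have hb : b = ∑ k, u k * c k * E (star (u k * c k) * b) := hb
        show a + b = ∑ k, u k * c k * E (star (u k * c k) * (a + b))
        simp only [mul_add, map_add, Finset.sum_add_distrib]
        rw [← ha, ← hb]
      · have ha : a = ∑ k, u k * c k * E (star (u k * c k) * a) := ha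
        show t • a = ∑ k, u k * c k * E (star (u k * c k) * (t • a))
        simp only [mul_smul_comm, map_smul, ← Finset.smul_sum]
        rw [← ha]
    have := closure_minimal hsub hclosed
    rw [dense_span_normalizer hreg] at this
    exact this (Set.mem_univ x)
  refine ⟨m, fun k => u k * c k, hg.ortho, fun x => ?_, fun x => ?_⟩
  · have := congrArg star (hx (star x))
    rw [star_star, star_sum] at this
    conv_lhs => rw [this]
    refine Finset.sum_congr rfl fun k _ => ?_
    rw [star_mul, ← hE.map_star, star_mul, star_star, star_star]
  · conv_lhs => rw [hx x]
    refine Finset.sum_congr rfl fun k _ => ?_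
    rw [h.exchange_star hcl hR hB (hg.norm k) (hg.cent k), mul_assoc _ (star (u k)),
      ← mul_assoc (star (u k)) (u k), (hg.norm k).left, one_mul, mul_assoc, mul_assoc,
      hg.cent k _ (hE.1 _)]

end Helpers

/-- the minimal conditional expectation of a regular inclusion `B ⊂ A` of
simple unital C*-algebras with a finite-index conditional expectation admits a two-sided
orthonormal quasi-basis. -/
theorem minimal_CE_of_regular_inclusion_has_two_sided_ON_quasi_basis
    (B : StarSubalgebra ℂ A) (hBclosed : IsClosed (B : Set A))
    (hAsimple : IsSimpleCStar (Set.univ : Set A))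
    (hBsimple : IsSimpleCStar (B : Set A))
    (hreg : IsRegular (B : Set A))
    (E : A →ₗ[ℂ] A) (hE : IsCondExp (B : Set A) E)
    (nE : ℕ) (lE : Fin nE → A) (hlE : IsRightQB E lE)
    (E₀ : A →ₗ[ℂ] A) (hE₀ : IsMinimalCondExp (B : Set A) E₀) :
    ∃ (m : ℕ) (v : Fin m → A),
      (∀ k l, E₀ (star (v k) * v l) = if k = l then (1 : A) else 0) ∧
      (∀ x : A, x = ∑ k, E₀ (x * v k) * star (v k)) ∧
      (∀ x : A, x = ∑ k, E₀ (x * star (v k)) * v k) := by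
  let _ : CStarAlgebra A := {}
  let _ : PartialOrder A := CStarAlgebra.spectralOrder A
  have _ : StarOrderedRing A := CStarAlgebra.spectralOrderedRing A
  rcases subsingleton_or_nontrivial A with hA | hA
  · exact ⟨0, fun k => k.elim0, fun k => k.elim0, fun x => Subsingleton.elim _ _,
      fun x => Subsingleton.elim _ _⟩
  · obtain ⟨hE₀c, r, n, l, hl, hind, hmin⟩ := hE₀
    exact two_sided_basis (r := r) (l := l) ⟨hE₀c, hl, hind, hmin⟩ hBclosed hAsimple hBsimple hreg

end RegularInclusion
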